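/- Let 𝓘 be an SND-RR instance on D = (N,A) with time horizon T, 𝒜 a valid arc partition, and G = G(D,𝒜) the auxiliary graph. Let G_S be a partial time-expanded network of G whose timed-node set V_S satisfies property (P1') and whose arcs E_S are given by property (P2'). Then for every feasible solution of SND-RR(G_T) with cost C there exists a feasible solution of SND-RR(G_S) with cost at most C; consequently the optimal value of SND-RR(G_S) is a lower bound on the optimal value of SND-RR(G_T). -/

import Mathlib

/-!
Keep every route of the given solution, cut it at its first visit to the terminal copy `d_k⁰`, and
move each departure time down to the nearest time point available at the copy it leaves from.
Rounding down is monotone, so the trajectories still chain up in the partial network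
(`roundDown_mono`), and the release time survives because it is itself an available time point
(`le_roundDown`). True transit times only shrink under truncation, and telescoping the exact chain
bounds them (`release_add_transit_le`, `arrival_le_deadline`).

The cut guarantees that every arc `a = vw` is left from a copy `(v, some B)` with `a ∈ B ∈ 𝒜_v`.
Since the parts are disjoint, `B` depends on `a` only. Hence all commodities on `a` at a given time
are rounded by the same map `ρ a`, consolidated shipments stay consolidated, and the truck counts
`y' a s = ∑_{ρ a s₀ = s} y a s₀` suffice. Their total over `s` equals the total of `y a`, and the
flow costs only lose nonnegative terms.
-/

noncomputable section

attribute [local instance] Classical.propDecidable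

/-- A copy of a node of the flat network in the auxiliary graph: `(v, none)` is the
terminal copy `v⁰`, and `(v, some B)` is the copy `vⁱ` associated with the part
`B = A_i ∈ 𝒜_v` of the arc partition. -/
abbrev NodeCopy (N : Type*) := N × Option (Finset (N × N))

/-- The arcs of `B` leaving node `v` (the out-star `δ⁺_B(v)`). -/
def outAt {N : Type*} (B : Finset (N × N)) (v : N) : Finset (N × N) :=
  B.filter fun a => a.1 = v

/-- `x` is a genuine copy of the node `x.1` in the auxiliary graph `G(D,𝒜)`. -/
def IsCopy {N : Type*} (P : N → Finset (Finset (N × N))) (x : NodeCopy N) : Prop :=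
  ∀ B : Finset (N × N), x.2 = some B → B ∈ P x.1

/-- The node set `V^k` of the commodity subgraph `G^k`: the copies `(v, some B)` with
`∅ ≠ δ⁺_{D^k}(v) ⊆ B ∈ 𝒜_v`, together with the terminal copy `d_k⁰`. -/
def auxVk {N : Type*} (P : N → Finset (Finset (N × N))) (Ak : Finset (N × N))
    (dk : N) : Set (NodeCopy N) :=
  {x | ∃ B : Finset (N × N), x.2 = some B ∧ B ∈ P x.1 ∧
      (outAt Ak x.1).Nonempty ∧ outAt Ak x.1 ⊆ B}
    ∪ {((dk, none) : NodeCopy N)}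

/-- The arc set `E^k = {vⁱwʲ : vw ∈ A^k, vⁱ ∈ V^k, wʲ ∈ V^k}` of `G^k`. -/
def auxEk {N : Type*} (P : N → Finset (Finset (N × N))) (Ak : Finset (N × N))
    (dk : N) : Set (NodeCopy N × NodeCopy N) :=
  {e | (e.1.1, e.2.1) ∈ Ak ∧ e.1 ∈ auxVk P Ak dk ∧ e.2 ∈ auxVk P Ak dk}

/-- The largest element of `S` that is at most `t` (and `0` if there is none;
in our setting `0 ∈ S`, so it is the genuine maximum). -/
def roundDown (S : Finset ℕ) (t : ℕ) : ℕ := Nat.findGreatest (· ∈ S) t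

theorem roundDown_le (S : Finset ℕ) (t : ℕ) : roundDown S t ≤ t :=
  Nat.findGreatest_le t

theorem roundDown_mono (S : Finset ℕ) {a b : ℕ} (h : a ≤ b) : roundDown S a ≤ roundDown S b :=
  Nat.findGreatest_mono_right _ h

theorem le_roundDown {S : Finset ℕ} {s t : ℕ} (hs : s ∈ S) (h : s ≤ t) : s ≤ roundDown S t :=
  Nat.le_findGreatest h hs

theorem roundDown_mem {S : Finset ℕ} (h0 : 0 ∈ S) (t : ℕ) : roundDown S t ∈ S :=
  Nat.findGreatest_spec (P := (· ∈ S)) (Nat.zero_le t) h0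

/-- Telescoping the chain of departure times `t` along transit times `g`, starting after the
release time `r`. -/
theorem release_add_transit_le {m r : ℕ} {t g : ℕ → ℕ} (hr : r ≤ t 0)
    (hchain : ∀ i, i + 1 < m → t i + g i ≤ t (i + 1)) :
    ∀ n, n < m → r + ∑ i ∈ Finset.range n, g i ≤ t n := by
  intro n
  induction n with
  | zero => intro _; simpa using hr
  | succ n ih =>
    intro hn
    have h1 := ih (by omega)
    have h2 := hchain n hn
    rw [Finset.sum_range_succ]
    omega

/-- Every arrival along the trajectory, not only the last one, meets the deadline `l`. -/
theorem arrival_le_deadline {m l : ℕ} {t g : ℕ → ℕ}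
    (hchain : ∀ i, i + 1 < m → t i + g i ≤ t (i + 1))
    (hdl : t (m - 1) + g (m - 1) ≤ l) :
    ∀ n, n < m → t n + g n ≤ l := by
  intro n hn
  have hn' : n ≤ m - 1 := by omega
  induction hn' using Nat.decreasingInduction with
  | self => exact hdl
  | of_succ j hj ih =>
    have h1 := ih (by omega)
    have h2 := hchain j (by omega)
    omega

/-- **Lower-bound theorem for the partial auxiliary network.**  Let `G = G(D,𝒜)` be the
auxiliary graph of an SND-RR instance under a valid arc partition `𝒜`, and let `G_S` be
the partial time-expanded network built from a timed-node set `V_S` satisfying (P1') and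
(P2').  A feasible solution of SND-RR(G_T) consists of a trajectory in `G_T` for each
commodity `k` — a path from `(o'_k, r_k)` to `(d_k⁰, l_k)` with exact transit times whose
arcs lie in `G^k`, recorded by node copies `x k` and departure times `t k` — together
with truck counts `y` on the flat arcs of `D`, consolidating commodities that depart
along a copy of the same flat arc at the same time (the classes `𝓔_T(a)`).  Then there
is a feasible solution of SND-RR(G_S) — departure times available in `V_S`, arcs of `E_S`
chaining up, release times, deadlines and the true-transit-time constraints respected,
capacities obeyed with consolidation classes `𝓔_S(a)` — of cost at most the cost of the
given solution.  Consequently the optimal value of SND-RR(G_S) is a lower bound on the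
optimal value of SND-RR(G_T). -/
theorem snd_rr_partial_aux_network_lower_bound
    {N K : Type*} [Fintype K]
    (A : Finset (N × N)) (τ : N × N → ℕ) (T : ℕ) (hτ : ∀ a ∈ A, 0 < τ a)
    (c : K → N × N → ℝ) (f : N × N → ℝ) (u : N × N → ℕ)
    (hc : ∀ (k : K), ∀ a ∈ A, 0 < c k a) (hf : ∀ a ∈ A, 0 < f a)
    (hu : ∀ a ∈ A, 0 < u a)
    (o d : K → N) (r l : K → ℕ) (q : K → ℕ)
    (hq : ∀ k, 0 < q k) (hlT : ∀ k, l k ≤ T)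
    (Ak : K → Finset (N × N)) (hAkA : ∀ k, Ak k ⊆ A)
    -- `𝒜` is a valid arc partition
    (P : N → Finset (Finset (N × N)))
    (hsub : ∀ v : N, ∀ B ∈ P v, B ⊆ outAt A v)
    (hcover : ∀ v : N, ∀ a ∈ outAt A v, ∃ B ∈ P v, a ∈ B)
    (hdisj : ∀ v : N, ∀ B ∈ P v, ∀ B' ∈ P v, B ≠ B' → Disjoint B B')
    (hvalid : ∀ (k : K) (v : N), ∃ B ∈ P v, outAt (Ak k) v ⊆ B)
    -- the timed-node set `V_S` of `G_S`, satisfying property (P1')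
    (VS : NodeCopy N → Finset ℕ)
    (hP1o : ∀ k : K, ∀ B : Finset (N × N), B ∈ P (o k) → outAt (Ak k) (o k) ⊆ B →
      r k ∈ VS ((o k, some B) : NodeCopy N))
    (hP1d : ∀ k : K, l k ∈ VS ((d k, none) : NodeCopy N))
    (hP1T : ∀ v : N, T ∈ VS ((v, none) : NodeCopy N))
    (hP10 : ∀ w : NodeCopy N, IsCopy P w → 0 ∈ VS w)
    (hVST : ∀ w : NodeCopy N, ∀ s ∈ VS w, s ≤ T)
    -- a feasible solution of SND-RR(G_T): trajectories in `G_T` ...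
    (m : K → ℕ) (x : K → ℕ → NodeCopy N) (t : K → ℕ → ℕ) (y : N × N → ℕ → ℕ)
    (hm : ∀ k, 0 < m k)
    (hx0 : ∀ k, ∃ B : Finset (N × N),
      x k 0 = ((o k, some B) : NodeCopy N) ∧ B ∈ P (o k) ∧ outAt (Ak k) (o k) ⊆ B)
    (hxm : ∀ k, x k (m k) = ((d k, none) : NodeCopy N))
    (harc : ∀ k, ∀ i < m k, (x k i, x k (i+1)) ∈ auxEk P (Ak k) (d k))
    (hr : ∀ k, r k ≤ t k 0)
    (hchain : ∀ k, ∀ i, i + 1 < m k →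
      t k i + τ ((x k i).1, (x k (i+1)).1) ≤ t k (i+1))
    (hdl : ∀ k, t k (m k - 1) + τ ((x k (m k - 1)).1, (x k (m k)).1) ≤ l k)
    (hhor : ∀ k, ∀ i < m k, t k i + τ ((x k i).1, (x k (i+1)).1) ≤ T)
    -- ... and truck counts: commodities consolidate when they depart along a copy of
    -- the same flat arc of `D` at the same time (the classes `𝓔_T(a)`)
    (hcap : ∀ a ∈ A, ∀ s ≤ T,
      (∑ k, if (∃ i < m k, ((x k i).1, (x k (i+1)).1) = a ∧ t k i = s)
        then q k else 0) ≤ u a * y a s) :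
    -- there is a feasible solution of SND-RR(G_S) of cost at most the cost of (x,y)
    ∃ (m' : K → ℕ) (x' : K → ℕ → NodeCopy N) (t' : K → ℕ → ℕ) (y' : N × N → ℕ → ℕ),
      (∀ k, 0 < m' k) ∧
      (∀ k, ∃ B : Finset (N × N),
        x' k 0 = ((o k, some B) : NodeCopy N) ∧ B ∈ P (o k) ∧
          outAt (Ak k) (o k) ⊆ B) ∧
      (∀ k, x' k (m' k) = ((d k, none) : NodeCopy N)) ∧
      (∀ k, ∀ i < m' k, (x' k i, x' k (i+1)) ∈ auxEk P (Ak k) (d k)) ∧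
      -- all departure times are available time points of `V_S`
      (∀ k, ∀ i < m' k, t' k i ∈ VS (x' k i)) ∧
      (∀ k, ∀ i < m' k, t' k i + τ ((x' k i).1, (x' k (i+1)).1) ≤ T) ∧
      (∀ k, r k ≤ t' k 0) ∧
      -- consecutive arcs of `E_S` chain up: the rounded arrival time of each movement
      -- arc of `G_S` is at most the next departure time
      (∀ k, ∀ i, i + 1 < m' k →
        roundDown (VS (x' k (i+1)))
            (t' k i + τ ((x' k i).1, (x' k (i+1)).1)) ≤ t' k (i+1)) ∧
      (∀ k, roundDown (VS ((d k, none) : NodeCopy N))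
          (t' k (m' k - 1) + τ ((x' k (m' k - 1)).1, (x' k (m' k)).1)) ≤ l k) ∧
      -- the true-transit-time feasibility constraint of SND-RR(G_S)
      (∀ k, (∑ i ∈ Finset.range (m' k), (τ ((x' k i).1, (x' k (i+1)).1) : ℤ))
          ≤ (l k : ℤ) - (r k : ℤ)) ∧
      -- capacity constraints in `G_S`, with the consolidation classes `𝓔_S(a)`
      (∀ a ∈ A, ∀ s ≤ T,
        (∑ k, if (∃ i < m' k, ((x' k i).1, (x' k (i+1)).1) = a ∧ t' k i = s)
          then q k else 0) ≤ u a * y' a s) ∧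
      -- the cost of the new solution is at most the cost of the given one
      ((∑ a ∈ A, ∑ s ∈ Finset.range (T+1), f a * (y' a s : ℝ))
          + ∑ k, ∑ i ∈ Finset.range (m' k),
              c k ((x' k i).1, (x' k (i+1)).1) * (q k : ℝ)
        ≤ (∑ a ∈ A, ∑ s ∈ Finset.range (T+1), f a * (y a s : ℝ))
          + ∑ k, ∑ i ∈ Finset.range (m k),
              c k ((x k i).1, (x k (i+1)).1) * (q k : ℝ)) := by
  have hex : ∀ k, ∃ j, x k j = ((d k, none) : NodeCopy N) := fun k => ⟨m k, hxm k⟩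
  -- the truncation index: the first visit to the terminal copy
  let m' : K → ℕ := fun k => Nat.find (hex k)
  have hm'x : ∀ k, x k (m' k) = ((d k, none) : NodeCopy N) := fun k => Nat.find_spec (hex k)
  have hm'le : ∀ k, m' k ≤ m k := fun k => Nat.find_min' (hex k) (hxm k)
  have hm'min : ∀ k i, i < m' k → x k i ≠ ((d k, none) : NodeCopy N) :=
    fun k i hi => Nat.find_min (hex k) hi
  have hm'pos : ∀ k, 0 < m' k := by
    intro k
    rcases Nat.eq_zero_or_pos (m' k) with h | h
    · obtain ⟨B, hB, -⟩ := hx0 k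
      have h2 := hm'x k
      rw [h, hB] at h2
      simp at h2
    · exact h
  have hsrc : ∀ k i, i < m' k → ∃ B, x k i = ((x k i).1, some B) ∧ B ∈ P (x k i).1 ∧
      ((x k i).1, (x k (i+1)).1) ∈ B := by
    intro k i hi
    obtain ⟨h1, h2, -⟩ := harc k i (lt_of_lt_of_le hi (hm'le k))
    rcases h2 with ⟨B, hB, hBP, -, hsubB⟩ | h2
    · refine ⟨B, Prod.ext rfl hB, hBP, hsubB ?_⟩
      exact Finset.mem_filter.2 ⟨h1, rfl⟩
    · exact absurd h2 (hm'min k i hi)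
  have hpart : ∀ a : N × N, ∃ B : Finset (N × N), ∀ B' ∈ P a.1, a ∈ B' → B' = B := by
    intro a
    by_cases h : ∃ B ∈ P a.1, a ∈ B
    · obtain ⟨B, hB, haB⟩ := h
      refine ⟨B, fun B' hB' haB' => ?_⟩
      by_contra hne
      exact Finset.disjoint_left.1 (hdisj a.1 B' hB' B hB hne) haB' haB
    · exact ⟨∅, fun B' hB' haB' => absurd ⟨B', hB', haB'⟩ h⟩
  choose part hpart using hpart
  -- the rounding map common to all departures along the flat arc `a`
  let ρ : N × N → ℕ → ℕ := fun a s => roundDown (VS (a.1, some (part a))) s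
  let t' : K → ℕ → ℕ := fun k i => roundDown (VS (x k i)) (t k i)
  have ht'ρ : ∀ k i, i < m' k → t' k i = ρ ((x k i).1, (x k (i+1)).1) (t k i) := by
    intro k i hi
    obtain ⟨B, hxB, hBP, haB⟩ := hsrc k i hi
    have hB := hpart ((x k i).1, (x k (i+1)).1) B hBP haB
    show roundDown (VS (x k i)) (t k i) = roundDown (VS ((x k i).1, some _)) (t k i)
    rw [← hB, ← hxB]
  have ht'le : ∀ k i, t' k i ≤ t k i := fun k i => roundDown_le _ _
  have harr : ∀ k i, i < m k → t k i + τ ((x k i).1, (x k (i+1)).1) ≤ l k := by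
    intro k
    refine arrival_le_deadline (g := fun i => τ ((x k i).1, (x k (i+1)).1)) (hchain k) ?_
    have h := hdl k
    rwa [← Nat.sub_add_cancel (hm k), Nat.add_sub_cancel] at h
  refine ⟨m', x, t', fun a s => ∑ s₀ ∈ (Finset.range (T+1)).filter (fun s₀ => ρ a s₀ = s), y a s₀,
    hm'pos, hx0, hm'x, fun k i hi => harc k i (lt_of_lt_of_le hi (hm'le k)), ?_, ?_, ?_, ?_, ?_,
    ?_, ?_, ?_⟩
  · intro k i hi
    obtain ⟨B, hxB, hBP, -⟩ := hsrc k i hi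
    refine roundDown_mem (hP10 _ fun B' hB' => ?_) _
    rw [hxB] at hB'
    cases hB'
    exact hBP
  · intro k i hi
    have h1 := hhor k i (lt_of_lt_of_le hi (hm'le k))
    have h2 := ht'le k i
    omega
  · intro k
    obtain ⟨B, hxB, hBP, hB⟩ := hx0 k
    refine le_roundDown ?_ (hr k)
    rw [hxB]
    exact hP1o k B hBP hB
  · intro k i hi
    refine roundDown_mono _ ?_
    have h1 := hchain k i (lt_of_lt_of_le hi (hm'le k))
    have h2 := ht'le k i
    omega
  · intro k
    refine (roundDown_le _ _).trans ?_
    have hp := hm'pos k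
    have hl := hm'le k
    have h1 := harr k (m' k - 1) (by omega)
    rw [Nat.sub_add_cancel hp] at h1
    have h2 := ht'le k (m' k - 1)
    omega
  · intro k
    have hp := hm'pos k
    have hl := hm'le k
    have h1 := harr k (m' k - 1) (by omega)
    have h2 := release_add_transit_le (g := fun i => τ ((x k i).1, (x k (i+1)).1)) (hr k)
      (hchain k) (m' k - 1) (by omega)
    have h3 := Finset.sum_range_succ (fun i => τ ((x k i).1, (x k (i+1)).1)) (m' k - 1)
    rw [Nat.sub_add_cancel hp] at h3 h1
    rw [← Nat.cast_sum]
    omega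
  · intro a ha s hs
    rw [Finset.mul_sum]
    -- a shipment leaving at the rounded time `s` left at some original time in the fibre over `s`
    calc (∑ k, if (∃ i < m' k, ((x k i).1, (x k (i+1)).1) = a ∧ t' k i = s) then q k else 0)
        ≤ ∑ k, ∑ s₀ ∈ (Finset.range (T+1)).filter (fun s₀ => ρ a s₀ = s),
            if (∃ i < m k, ((x k i).1, (x k (i+1)).1) = a ∧ t k i = s₀) then q k else 0 := by
          refine Finset.sum_le_sum fun k _ => ?_
          split_ifs with h
          · obtain ⟨i, hi, hia, his⟩ := h
            have hi' := lt_of_lt_of_le hi (hm'le k)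
            have hmem : t k i ∈ (Finset.range (T+1)).filter (fun s₀ => ρ a s₀ = s) := by
              refine Finset.mem_filter.2 ⟨Finset.mem_range.2 ?_, ?_⟩
              · have := hhor k i hi'
                omega
              · rw [← his, ht'ρ k i hi, hia]
            refine le_trans (le_of_eq ?_) (Finset.single_le_sum (fun _ _ => Nat.zero_le _) hmem)
            rw [if_pos ⟨i, hi', hia, rfl⟩]
          · exact Nat.zero_le _
      _ = ∑ s₀ ∈ (Finset.range (T+1)).filter (fun s₀ => ρ a s₀ = s), ∑ k,
            if (∃ i < m k, ((x k i).1, (x k (i+1)).1) = a ∧ t k i = s₀) then q k else 0 :=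
          Finset.sum_comm
      _ ≤ _ := by
          refine Finset.sum_le_sum fun s₀ hs₀ => hcap a ha s₀ ?_
          have := Finset.mem_range.1 (Finset.mem_filter.1 hs₀).1
          omega
  · refine add_le_add (le_of_eq ?_) ?_
    · refine Finset.sum_congr rfl fun a _ => ?_
      rw [← Finset.mul_sum, ← Finset.mul_sum]
      congr 1
      push_cast
      refine Finset.sum_fiberwise_of_maps_to (fun s₀ hs₀ => ?_) _
      have h1 := Finset.mem_range.1 hs₀
      have h2 : ρ a s₀ ≤ s₀ := roundDown_le _ _
      exact Finset.mem_range.2 (by omega)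
    · refine Finset.sum_le_sum fun k _ => ?_
      refine Finset.sum_le_sum_of_subset_of_nonneg (Finset.range_mono (hm'le k)) fun i hi _ => ?_
      have h1 := (harc k i (Finset.mem_range.1 hi)).1
      exact mul_nonneg (hc k _ (hAkA k h1)).le (Nat.cast_nonneg _)
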